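/- arXiv:2505.18626 — 2 statements merged into one kernel-verified Lean document; each statement's English description precedes it below -/
import Mathlib

section
/- The class 𝒜 of subsets of X^ω having the Automatic Baire property is not closed under countable union: there exists a countable family (F_i)_{i∈ℕ} of subsets of X^ω, each having the Automatic Baire property, whose union ⋃_{i∈ℕ} F_i does not have the Automatic Baire property. -/
open Set MeasureTheory Computability

namespace AutoBaire

/-- The Cantor topology on the space of ω-words over `X`:
the product of the discrete topology on `X`. -/
def cantorTop (X : Type) : TopologicalSpace (ℕ → X) :=
  @Pi.topologicalSpace ℕ (fun _ => X) (fun _ => ⊥)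

/-- The Borel σ-algebra of the Cantor space. -/
def cantorBorel (X : Type) : MeasurableSpace (ℕ → X) :=
  @borel (ℕ → X) (cantorTop X)

variable {X : Type}

/-- Concatenation `w·ξ` of a finite word with an ω-word. -/
def wcat (w : List X) (ξ : ℕ → X) : ℕ → X :=
  Stream'.appendStream' w ξ

/-- The ball (cylinder) `w·X^ω`. -/
def cyl (w : List X) : Set (ℕ → X) := {ξ | ∃ η : ℕ → X, ξ = wcat w η}

/-- The ω-language `W·A` for a language `W` and an ω-language `A`. -/
def catOmega (W : Language X) (A : Set (ℕ → X)) : Set (ℕ → X) :=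
  {ξ | ∃ w ∈ W, ∃ η ∈ A, ξ = wcat w η}

/-- `V^ω`: the set of ω-words that are infinite concatenations
`v₁·v₂·⋯` of non-empty words `vᵢ ∈ V`. -/
def omegaPow (V : Language X) : Set (ℕ → X) :=
  {ξ | ∃ f : ℕ → List X, (∀ i, f i ∈ V ∧ f i ≠ []) ∧
    ∀ k, ξ ∈ cyl (((List.range k).map f).flatten)}

/-- Regular languages: those obtained from finite languages via the operations
union, concatenation and star. -/
inductive IsRegLang : Language X → Prop
  | finite (W : Language X) : (W : Set (List X)).Finite → IsRegLang W
  | union (W V : Language X) : IsRegLang W → IsRegLang V → IsRegLang (W + V)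
  | concat (W V : Language X) : IsRegLang W → IsRegLang V → IsRegLang (W * V)
  | star (W : Language X) : IsRegLang W → IsRegLang (W∗)

/-- Regular ω-languages: finite unions `⋃ᵢ Wᵢ·Vᵢ^ω` with `Wᵢ, Vᵢ` regular. -/
def IsRegOmega (F : Set (ℕ → X)) : Prop :=
  ∃ (n : ℕ) (W V : Fin n → Language X),
    (∀ i, IsRegLang (W i) ∧ IsRegLang (V i)) ∧
    F = ⋃ i, catOmega (W i) (omegaPow (V i))

/-- `X*·w·X^ω`: the set of ω-words containing `w` as an infix. -/
def infixOcc (w : List X) : Set (ℕ → X) :=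
  {ξ | ∃ u : List X, ξ ∈ cyl (u ++ w)}

/-- An ω-word is disjunctive if every finite word occurs in it as an infix. -/
def Disjunctive (ξ : ℕ → X) : Prop := ∀ w : List X, ξ ∈ infixOcc w

/-- Ultimately periodic ω-words: `ξ = w·v·v·v·⋯` with `v ≠ e`. -/
def UltPeriodic (ξ : ℕ → X) : Prop :=
  ∃ (w v : List X) (h : v ≠ []), ξ = wcat w (Stream'.cycle v h)

/-- The Automatic Baire property: `F Δ E ⊆ F'` for some regular open
ω-language `E` and some regular ω-language `F'` of first Baire category. -/
def HasABP (F : Set (ℕ → X)) : Prop :=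
  ∃ E F' : Set (ℕ → X),
    IsRegOmega E ∧ @IsOpen _ (cantorTop X) E ∧
    IsRegOmega F' ∧ @IsMeagre _ (cantorTop X) F' ∧
    symmDiff F E ⊆ F'

/-- The measure is finite and non-null: `0 < μ(X^ω) < ∞`. -/
def FiniteNonNull (μ : @MeasureTheory.Measure (ℕ → X) (cantorBorel X)) : Prop :=
  0 < μ Set.univ ∧ μ Set.univ < ⊤

/-- `supp(μ) = X^ω`: every non-empty open set has positive measure. -/
def FullSupport (μ : @MeasureTheory.Measure (ℕ → X) (cantorBorel X)) : Prop :=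
  ∀ U : Set (ℕ → X), @IsOpen _ (cantorTop X) U → U.Nonempty → 0 < μ U

/-- The balance condition: there is `c > 0` such that for all `w ∈ X*`, `x ∈ X`
either `μ(wx·X^ω) = 0` or `c·μ(w·X^ω) ≤ μ(wx·X^ω)`. -/
def Balanced (μ : @MeasureTheory.Measure (ℕ → X) (cantorBorel X)) : Prop :=
  ∃ c : ENNReal, 0 < c ∧ ∀ (w : List X) (x : X),
    μ (cyl (w ++ [x])) = 0 ∨ c * μ (cyl w) ≤ μ (cyl (w ++ [x]))

/-! Every element of a meagre regular ω-language has a tail avoiding `w`, for one fixed non-empty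
word `w`. Indeed, if some prefix `p` is such that every `p·w` extends to a word of `V∗`, then the
Banach–Mazur game shows that `W·V^ω` is not meagre. Otherwise each `p` can be extended to a `p·w`
that no word of `V∗` extends, and since `V∗` has only finitely many left quotients, `w` can be
chosen independently of `p`: it is then not an infix of any element of `V^ω`.

The countable set of all periodic words `w^ω` is a countable union of regular singletons. It is
meagre, so by the Baire category theorem the Automatic Baire property would put it inside a meagre
regular ω-language, whereas `w` recurs in every tail of `w^ω`. -/

section RegularLanguages

variable {α : Type*} {V W L : Language α} {u v : List α}

theorem append_mem_kstar (hu : u ∈ V∗) (hv : v ∈ V∗) : u ++ v ∈ V∗ := by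
  have huv : u ++ v ∈ V∗ * V∗ := Language.append_mem_mul hu hv
  rwa [kstar_mul_kstar] at huv

theorem append_mem_kstar_of_mem (hu : u ∈ V) (hv : v ∈ V∗) : u ++ v ∈ V∗ :=
  append_mem_kstar (le_kstar (a := V) hu) hv

/-- The left quotients of `V` by what remains of `u` after removing a prefix in `W`. These are the
pieces from which the left quotients by `u` of `W * V` and (for `W = V∗`) of `V∗` are built. -/
def splitQuotients (W V : Language α) (u : List α) : Set (Language α) :=
  V.leftQuotient '' {r | ∃ c ∈ W, c ++ r = u}

theorem finite_range_splitQuotients (W : Language α) (hV : V.IsRegular) :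
    (range (splitQuotients W V)).Finite :=
  hV.finite_range_leftQuotient.finite_subsets.subset <|
    range_subset_iff.2 fun _ => image_subset_range _ _

theorem mem_sSup_splitQuotients {y : List α} :
    y ∈ sSup (splitQuotients W V u) ↔ ∃ c ∈ W, ∃ r, c ++ r = u ∧ r ++ y ∈ V := by
  constructor
  · rintro ⟨_, ⟨r, ⟨c, hc, hcr⟩, rfl⟩, hy⟩
    exact ⟨c, hc, r, hcr, hy⟩
  · rintro ⟨c, hc, r, hcr, hy⟩
    exact ⟨_, ⟨r, ⟨c, hc, hcr⟩, rfl⟩, hy⟩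

theorem leftQuotient_mul (W V : Language α) (u : List α) :
    (W * V).leftQuotient u = W.leftQuotient u * V + sSup (splitQuotients W V u) := by
  ext y
  rw [Language.mem_leftQuotient, Language.mem_mul, Language.mem_add, Language.mem_mul,
    mem_sSup_splitQuotients]
  constructor
  · rintro ⟨a, ha, b, hb, hab⟩
    obtain ⟨r, rfl, rfl⟩ | ⟨r, rfl, rfl⟩ := List.append_eq_append_iff.1 hab
    · exact .inr ⟨a, ha, r, rfl, hb⟩
    · exact .inl ⟨r, ha, b, hb, rfl⟩
  · rintro (⟨a, ha, b, hb, rfl⟩ | ⟨c, hc, r, rfl, hry⟩)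
    · exact ⟨u ++ a, ha, b, hb, List.append_assoc ..⟩
    · exact ⟨c, hc, r ++ y, hry, (List.append_assoc ..).symm⟩

theorem exists_mem_leftQuotient_mul_kstar_of_append_mem_kstar (hu : u ≠ [])
    (huv : u ++ v ∈ V∗) : ∃ c ∈ V∗, ∃ r, c ++ r = u ∧ v ∈ V.leftQuotient r * V∗ := by
  obtain ⟨S, hS, hSV⟩ := huv
  induction S generalizing u with
  | nil => exact absurd (List.append_eq_nil_iff.1 hS).1 hu
  | cons s S ih =>
    obtain ⟨hs, hS_mem⟩ := List.forall_mem_cons.1 hSV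
    rw [List.flatten_cons] at hS
    obtain ⟨a, rfl, rfl⟩ | ⟨a, rfl, ha⟩ := List.append_eq_append_iff.1 hS
    · exact ⟨[], Language.nil_mem_kstar V, u, rfl,
        Language.append_mem_mul hs (Language.join_mem_kstar hS_mem)⟩
    · obtain rfl | ha_ne := eq_or_ne a []
      · refine ⟨[], Language.nil_mem_kstar V, s ++ [], rfl, ?_⟩
        have hv : v ∈ V∗ := by
          rw [List.nil_append] at ha
          exact ha ▸ Language.join_mem_kstar hS_mem
        exact Language.append_mem_mul (a := []) (by simpa using hs) hv
      · obtain ⟨c, hc, r, rfl, hv⟩ := ih ha_ne ha.symm hS_mem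
        exact ⟨s ++ c, append_mem_kstar_of_mem hs hc, r, List.append_assoc .., hv⟩

theorem leftQuotient_kstar (V : Language α) (hu : u ≠ []) :
    (V∗).leftQuotient u = sSup (splitQuotients V∗ V u) * V∗ := by
  ext y
  rw [Language.mem_leftQuotient, Language.mem_mul]
  constructor
  · intro hy
    obtain ⟨c, hc, r, hcr, q, hq, t, ht, rfl⟩ :=
      exists_mem_leftQuotient_mul_kstar_of_append_mem_kstar hu hy
    exact ⟨q, mem_sSup_splitQuotients.2 ⟨c, hc, r, hcr, hq⟩, t, ht, rfl⟩
  · rintro ⟨q, hq, t, ht, rfl⟩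
    obtain ⟨c, hc, r, rfl, hrq⟩ := mem_sSup_splitQuotients.1 hq
    simpa only [List.append_assoc] using append_mem_kstar hc (append_mem_kstar_of_mem hrq ht)

theorem isRegular_of_finite (hW : (W : Set (List α)).Finite) : W.IsRegular := by
  have hT : (⋃ w ∈ (W : Set (List α)), {s | s <:+ w}).Finite :=
    hW.biUnion fun w _ => by simpa only [List.mem_tails] using w.tails.finite_toSet
  refine .of_finite_range_leftQuotient (hT.finite_subsets.subset ?_)
  rintro _ ⟨u, rfl⟩ y hy
  exact mem_biUnion hy (List.suffix_append u y)

theorem isRegular_mul (hW : W.IsRegular) (hV : V.IsRegular) : (W * V).IsRegular := by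
  refine .of_finite_range_leftQuotient <| (hW.finite_range_leftQuotient.image2
    (fun A S => A * V + sSup S) (finite_range_splitQuotients W hV)).subset ?_
  rintro _ ⟨u, rfl⟩
  exact ⟨_, mem_range_self u, _, mem_range_self u, (leftQuotient_mul W V u).symm⟩

theorem isRegular_kstar (hV : V.IsRegular) : (V∗).IsRegular := by
  refine .of_finite_range_leftQuotient <| (((finite_range_splitQuotients V∗ hV).image
    (fun S => sSup S * V∗)).insert V∗).subset ?_
  rintro _ ⟨u, rfl⟩
  obtain rfl | hu := eq_or_ne u []
  · exact .inl rfl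
  · exact .inr ⟨_, mem_range_self u, (leftQuotient_kstar V hu).symm⟩

theorem IsRegLang.isRegular {V : Language X} (hV : IsRegLang V) : V.IsRegular := by
  induction hV with
  | finite _ h => exact isRegular_of_finite h
  | union _ _ _ _ hW hV => exact hW.add hV
  | concat _ _ _ _ hW hV => exact isRegular_mul hW hV
  | star _ _ hW => exact isRegular_kstar hW

theorem leftQuotient_append_eq_zero (hu : L.leftQuotient u = 0) (v : List α) :
    L.leftQuotient (u ++ v) = 0 := by
  rw [Language.leftQuotient_append, hu]
  rfl

theorem exists_forall_mem_leftQuotient_append_eq_zero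
    (hL : ∀ p, ∃ w, L.leftQuotient (p ++ w) = 0) {P : Set (List α)} (hP : P.Finite) :
    ∃ w, ∀ p ∈ P, L.leftQuotient (p ++ w) = 0 := by
  induction P, hP using Set.Finite.induction_on with
  | empty => exact ⟨[], fun _ hp => hp.elim⟩
  | @insert p₀ P _ _ ih =>
    obtain ⟨w, hw⟩ := ih
    obtain ⟨w', hw'⟩ := hL (p₀ ++ w)
    refine ⟨w ++ w', forall_mem_insert.2 ⟨?_, fun p hp => ?_⟩⟩ <;> rw [← List.append_assoc]
    · exact hw'
    · exact leftQuotient_append_eq_zero (hw p hp) w'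

theorem exists_forall_leftQuotient_append_eq_zero (hreg : L.IsRegular)
    (hL : ∀ p, ∃ w, L.leftQuotient (p ++ w) = 0) : ∃ w, ∀ p, L.leftQuotient (p ++ w) = 0 := by
  have := hreg.finite_range_leftQuotient.to_subtype
  obtain ⟨w, hw⟩ := exists_forall_mem_leftQuotient_append_eq_zero hL
    (finite_range (rangeSplitting L.leftQuotient))
  refine ⟨w, fun p => ?_⟩
  have hp := hw _ (mem_range_self ⟨L.leftQuotient p, mem_range_self p⟩)
  rwa [Language.leftQuotient_append, apply_rangeSplitting L.leftQuotient,
    ← Language.leftQuotient_append] at hp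

end RegularLanguages

section OmegaWords

variable {u v w : List X} {ξ η : ℕ → X} {V : Language X}

theorem wcat_append (u v : List X) (ξ : ℕ → X) : wcat (u ++ v) ξ = wcat u (wcat v ξ) :=
  Stream'.append_append_stream u v ξ

theorem wcat_mem_cyl (w : List X) (ξ : ℕ → X) : wcat w ξ ∈ cyl w := ⟨ξ, rfl⟩

theorem wcat_injective (w : List X) : Function.Injective (wcat w) :=
  fun _ _ => Stream'.append_right_injective _ _ _

theorem mem_cyl_iff : ξ ∈ cyl w ↔ ∀ i (hi : i < w.length), ξ i = w[i] := by
  constructor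
  · rintro ⟨η, rfl⟩ i hi
    exact Stream'.get_append_left i w η hi
  · intro h
    refine ⟨fun i => ξ (w.length + i), funext fun i => ?_⟩
    obtain hi | hi := lt_or_ge i w.length
    · exact (h i hi).trans (Stream'.get_append_left i w _ hi).symm
    · obtain ⟨i, rfl⟩ := Nat.exists_eq_add_of_le hi
      exact (Stream'.get_append_right i w fun i => ξ (w.length + i)).symm

theorem mem_cyl_ofFn_iff {n : ℕ} :
    η ∈ cyl (List.ofFn fun i : Fin n => ξ i) ↔ ∀ i < n, η i = ξ i := by
  simp only [mem_cyl_iff, List.length_ofFn, List.getElem_ofFn]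

theorem cyl_ofFn_eq_cylinder (ξ : ℕ → X) (n : ℕ) :
    cyl (List.ofFn fun i : Fin n => ξ i) = PiNat.cylinder ξ n :=
  Set.ext fun _ => mem_cyl_ofFn_iff

theorem prefix_of_mem_cyl (hu : ξ ∈ cyl u) (hv : ξ ∈ cyl v) (h : u.length ≤ v.length) :
    u <+: v :=
  List.prefix_iff_getElem.2 ⟨h, fun i hi =>
    (mem_cyl_iff.1 hu i hi).symm.trans (mem_cyl_iff.1 hv i (hi.trans_le h))⟩

theorem cyl_subset_cyl (h : u <+: v) : cyl v ⊆ cyl u := by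
  obtain ⟨t, rfl⟩ := h
  rintro _ ⟨ξ, rfl⟩
  exact ⟨wcat t ξ, wcat_append u t ξ⟩

theorem wcat_mem_cyl_append_iff : wcat u ξ ∈ cyl (u ++ v) ↔ ξ ∈ cyl v := by
  constructor
  · rintro ⟨η, h⟩
    rw [wcat_append] at h
    exact ⟨η, wcat_injective u h⟩
  · rintro ⟨η, rfl⟩
    exact ⟨η, (wcat_append u v η).symm⟩

theorem exists_forall_mem_cyl {c : ℕ → List X} (hc : ∀ k, c k <+: c (k + 1))
    (hlen : ∀ k, k ≤ (c k).length) : ∃ ξ : ℕ → X, ∀ k, ξ ∈ cyl (c k) := by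
  have hmono : ∀ {k m}, k ≤ m → c k <+: c m := fun {k m} hkm => by
    induction m, hkm using Nat.le_induction with
    | base => exact List.prefix_rfl
    | succ m _ ih => exact ih.trans (hc m)
  refine ⟨fun i => (c (i + 1))[i]'(hlen (i + 1)), fun k => mem_cyl_iff.2 fun i _ => ?_⟩
  rcases le_total (i + 1) k with h | h
  · exact (hmono h).getElem _
  · exact ((hmono h).getElem _).symm

/-- The concatenation `v₀·v₁⋯vₖ₋₁` of the first `k` words of a sequence of words. -/
def prefixConcat (f : ℕ → List X) (k : ℕ) : List X := ((List.range k).map f).flatten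

theorem mem_omegaPow_iff : ξ ∈ omegaPow V ↔ ∃ f : ℕ → List X,
    (∀ i, f i ∈ V ∧ f i ≠ []) ∧ ∀ k, ξ ∈ cyl (prefixConcat f k) :=
  Iff.rfl

theorem prefixConcat_succ (f : ℕ → List X) (k : ℕ) :
    prefixConcat f (k + 1) = prefixConcat f k ++ f k := by
  simp [prefixConcat, List.range_succ]

theorem prefixConcat_succ' (f : ℕ → List X) (k : ℕ) :
    prefixConcat f (k + 1) = f 0 ++ prefixConcat (fun i => f (i + 1)) k := by
  simp [prefixConcat, List.range_succ_eq_map, Function.comp_def]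

theorem le_length_prefixConcat {f : ℕ → List X} (hf : ∀ i, f i ≠ []) (k : ℕ) :
    k ≤ (prefixConcat f k).length := by
  induction k with
  | zero => exact Nat.zero_le _
  | succ k ih =>
    rw [prefixConcat_succ, List.length_append]
    exact Nat.add_le_add ih (List.length_pos_iff.2 (hf k))

theorem prefixConcat_mem_kstar {f : ℕ → List X} (hf : ∀ i, f i ∈ V) (k : ℕ) :
    prefixConcat f k ∈ V∗ :=
  Language.join_mem_kstar <| List.forall_mem_map.2 fun i _ => hf i

theorem exists_eq_wcat_of_mem_omegaPow (hξ : ξ ∈ omegaPow V) :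
    ∃ v ∈ V, v ≠ [] ∧ ∃ η ∈ omegaPow V, ξ = wcat v η := by
  obtain ⟨f, hf, hξf⟩ := mem_omegaPow_iff.1 hξ
  have hξ0 : ξ ∈ cyl (f 0) := by simpa [prefixConcat] using hξf 1
  obtain ⟨η, rfl⟩ := hξ0
  refine ⟨f 0, (hf 0).1, (hf 0).2, η, ⟨fun i => f (i + 1), fun i => hf (i + 1), fun k => ?_⟩, rfl⟩
  have hk := hξf (k + 1)
  rwa [prefixConcat_succ', wcat_mem_cyl_append_iff] at hk

theorem subset_omegaPow_of_forall_exists_eq_wcat {S : Set (ℕ → X)}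
    (hS : ∀ ξ ∈ S, ∃ v ∈ V, v ≠ [] ∧ ∃ η ∈ S, ξ = wcat v η) : S ⊆ omegaPow V := by
  intro ξ hξ
  choose! v hvV hv_ne tail htail heq using hS
  have hiter : ∀ k, tail^[k] ξ ∈ S := fun k => by
    induction k with
    | zero => exact hξ
    | succ k ih => exact Function.iterate_succ_apply' tail k ξ ▸ htail _ ih
  refine mem_omegaPow_iff.2 ⟨fun i => v (tail^[i] ξ),
    fun i => ⟨hvV _ (hiter i), hv_ne _ (hiter i)⟩, fun k => ⟨tail^[k] ξ, ?_⟩⟩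
  induction k with
  | zero => rfl
  | succ k ih =>
    rwa [prefixConcat_succ, wcat_append, Function.iterate_succ_apply', ← heq _ (hiter k)]

theorem omegaPow_kstar_subset (V : Language X) : omegaPow V∗ ⊆ omegaPow V := by
  have hcat : catOmega V∗ (omegaPow V∗) ⊆ omegaPow V := by
    refine subset_omegaPow_of_forall_exists_eq_wcat ?_
    rintro _ ⟨u, hu, η, hη, rfl⟩
    obtain ⟨v, hv, hv_ne, ζ, hζ, rfl⟩ := exists_eq_wcat_of_mem_omegaPow hη
    obtain ⟨S, hS, hSV⟩ := Language.mem_kstar_iff_exists_nonempty.1 (append_mem_kstar hu hv)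
    rw [← wcat_append, hS]
    cases S with
    | nil => exact absurd (List.append_eq_nil_iff.1 hS).2 hv_ne
    | cons s S =>
      obtain ⟨⟨hs, hs_ne⟩, hSV⟩ := List.forall_mem_cons.1 hSV
      exact ⟨s, hs, hs_ne, wcat S.flatten ζ,
        ⟨_, Language.join_mem_kstar fun y hy => (hSV y hy).1, ζ, hζ, rfl⟩,
        wcat_append s S.flatten ζ⟩
  exact fun ξ hξ => hcat ⟨[], Language.nil_mem_kstar V, ξ, hξ, rfl⟩

theorem catOmega_mono {W W' : Language X} {A A' : Set (ℕ → X)} (hW : W ≤ W') (hA : A ⊆ A') :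
    catOmega W A ⊆ catOmega W' A' := by
  rintro _ ⟨w, hw, η, hη, rfl⟩
  exact ⟨w, hW hw, η, hA hη, rfl⟩

theorem catOmega_one (A : Set (ℕ → X)) : catOmega 1 A = A := by
  refine Subset.antisymm ?_ fun ξ hξ => ⟨[], rfl, ξ, hξ, rfl⟩
  rintro _ ⟨_, rfl, η, hη, rfl⟩
  exact hη

theorem infixOcc_subset_infixOcc (h : v <:+: w) : infixOcc w ⊆ infixOcc v := by
  obtain ⟨s, t, rfl⟩ := h
  rintro ξ ⟨u, hu⟩
  exact ⟨u ++ s, cyl_subset_cyl ⟨t, by simp only [List.append_assoc]⟩ hu⟩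

theorem omegaPow_subset_compl_infixOcc (hw : ∀ p, (V∗).leftQuotient (p ++ w) = 0) :
    omegaPow V ⊆ (infixOcc w)ᶜ := by
  rintro ξ hξ ⟨u, hu⟩
  obtain ⟨f, hf, hξf⟩ := mem_omegaPow_iff.1 hξ
  obtain ⟨t, ht⟩ := prefix_of_mem_cyl hu (hξf (u ++ w).length)
    (le_length_prefixConcat (fun i => (hf i).2) _)
  have hmem : t ∈ (V∗).leftQuotient (u ++ w) :=
    (Language.mem_leftQuotient _ _).2 (ht ▸ prefixConcat_mem_kstar (fun i => (hf i).1) _)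
  exact Language.notMem_zero t (hw u ▸ hmem)

/-- The periodic ω-word `w^ω = w·w·w⋯`. -/
def periodicWord (w : List X) (hw : w ≠ []) : ℕ → X := Stream'.cycle w hw

theorem periodicWord_eq_wcat (hw : w ≠ []) : periodicWord w hw = wcat w (periodicWord w hw) :=
  Stream'.cycle_eq w hw

theorem periodicWord_mem_cyl (hw : w ≠ []) (k : ℕ) :
    periodicWord w hw ∈ cyl (prefixConcat (fun _ => w) k) := by
  induction k with
  | zero => exact ⟨_, rfl⟩
  | succ k ih => rwa [periodicWord_eq_wcat, prefixConcat_succ', wcat_mem_cyl_append_iff]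

theorem omegaPow_singleton (hw : w ≠ []) :
    omegaPow ({w} : Set (List X)) = {periodicWord w hw} := by
  refine Subset.antisymm (fun ξ hξ => funext fun i => ?_)
    (singleton_subset_iff.2 ⟨fun _ => w, fun _ => ⟨rfl, hw⟩, periodicWord_mem_cyl hw⟩)
  obtain ⟨f, hf, hξf⟩ := mem_omegaPow_iff.1 hξ
  obtain rfl : f = fun _ => w := funext fun i => (hf i).1
  have hi := le_length_prefixConcat (fun _ => hw) (i + 1)
  exact (mem_cyl_iff.1 (hξf (i + 1)) i hi).trans
    (mem_cyl_iff.1 (periodicWord_mem_cyl hw (i + 1)) i hi).symm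

theorem periodicWord_notMem_catOmega_compl_infixOcc (hw : w ≠ []) :
    periodicWord w hw ∉ catOmega ⊤ (infixOcc w)ᶜ := by
  rintro ⟨u, -, η, hη, heq⟩
  have hlen := le_length_prefixConcat (fun _ => hw) u.length
  obtain ⟨r, hr⟩ := prefix_of_mem_cyl ⟨η, heq⟩
    (periodicWord_mem_cyl hw u.length) hlen
  refine hη ⟨r, (wcat_mem_cyl_append_iff (u := u)).1 ?_⟩
  rw [← heq, ← List.append_assoc, hr, ← prefixConcat_succ (fun _ => w)]
  exact periodicWord_mem_cyl hw (u.length + 1)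

theorem isRegOmega_singleton_periodicWord (hw : w ≠ []) : IsRegOmega {periodicWord w hw} := by
  refine ⟨1, fun _ => 1, fun _ => ({w} : Set (List X)),
    fun _ => ⟨.finite _ (finite_singleton _), .finite _ (finite_singleton _)⟩, ?_⟩
  rw [iUnion_const, catOmega_one, omegaPow_singleton hw]

theorem isRegOmega_empty : IsRegOmega (∅ : Set (ℕ → X)) :=
  ⟨0, fun _ => 0, fun _ => 0, fun i => i.elim0, iUnion_of_empty _ |>.symm⟩

end OmegaWords

section BaireCategory

theorem exists_seq_isOpen_dense_of_isMeagre {Y : Type*} [TopologicalSpace Y] {F : Set Y}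
    (hF : IsMeagre F) : ∃ U : ℕ → Set Y, (∀ k, IsOpen (U k) ∧ Dense (U k)) ∧ ⋂ k, U k ⊆ Fᶜ := by
  obtain ⟨S, hopen, hdense, hS, hSF⟩ := mem_residual_iff.1 hF
  obtain ⟨U, hU⟩ := (hS.insert univ).exists_eq_range (insert_nonempty _ _)
  refine ⟨U, fun k => ?_, ?_⟩
  · obtain hk | hk := hU.ge (mem_range_self k)
    · exact hk ▸ ⟨isOpen_univ, dense_univ⟩
    · exact ⟨hopen _ hk, hdense _ hk⟩
  · rwa [← sInter_range, ← hU, sInter_insert, univ_inter]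

variable [TopologicalSpace X] [DiscreteTopology X]

theorem isTopologicalBasis_cyl [Nonempty X] :
    TopologicalSpace.IsTopologicalBasis (range (cyl : List X → Set (ℕ → X))) := by
  convert PiNat.isTopologicalBasis_cylinders (fun _ : ℕ => X) using 1
  refine Subset.antisymm ?_ ?_
  · rintro _ ⟨w, rfl⟩
    let ξ := wcat w fun _ => Classical.arbitrary X
    have hw : (List.ofFn fun i : Fin w.length => ξ i) = w :=
      List.ext_getElem List.length_ofFn fun i _ hi =>
        (List.getElem_ofFn _).trans (mem_cyl_iff.1 (wcat_mem_cyl w _) i hi)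
    exact ⟨ξ, w.length, by rw [← cyl_ofFn_eq_cylinder, hw]⟩
  · rintro _ ⟨ξ, n, rfl⟩
    exact ⟨_, cyl_ofFn_eq_cylinder ξ n⟩

theorem exists_cyl_append_subset_of_dense [Nonempty X] {U : Set (ℕ → X)} (hUo : IsOpen U)
    (hUd : Dense U) (u : List X) : ∃ w ≠ [], cyl (u ++ w) ⊆ U := by
  let x := Classical.arbitrary X
  obtain ⟨ξ, hξu, hξU⟩ := hUd.inter_open_nonempty _
    (isTopologicalBasis_cyl.isOpen (mem_range_self (u ++ [x]))) ⟨_, wcat_mem_cyl _ fun _ => x⟩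
  obtain ⟨_, ⟨v, rfl⟩, hξv, hvU⟩ := isTopologicalBasis_cyl.exists_subset_of_mem_open hξU hUo
  let n := max (u ++ [x]).length v.length
  have hξn : ξ ∈ cyl (List.ofFn fun i : Fin n => ξ i) := mem_cyl_ofFn_iff.2 fun _ _ => rfl
  obtain ⟨r, hr⟩ := prefix_of_mem_cyl hξu hξn (by simp only [List.length_ofFn, n, le_max_left])
  have hv := prefix_of_mem_cyl hξv hξn (by simp only [List.length_ofFn, n, le_max_right])
  refine ⟨x :: r, List.cons_ne_nil x r, ?_⟩
  rw [List.append_cons, hr]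
  exact (cyl_subset_cyl hv).trans hvU

-- The second player's winning strategy in the Banach–Mazur game: from a word `u·c`, move to some
-- `u·c·p·w` whose cylinder lies in the next dense open set, then complete `p·w` to a word of `V`.
theorem exists_mem_omegaPow_wcat_notMem_of_isMeagre [Nonempty X] {F : Set (ℕ → X)}
    (hF : IsMeagre F) {V : Language X} {p : List X} (hp : ∀ w, V.leftQuotient (p ++ w) ≠ 0)
    (u : List X) : ∃ η ∈ omegaPow V, wcat u η ∉ F := by
  obtain ⟨U, hU, hUF⟩ := exists_seq_isOpen_dense_of_isMeagre hF
  have hmove : ∀ k c, ∃ d ∈ V, d ≠ [] ∧ cyl (u ++ (c ++ d)) ⊆ U k := fun k c => by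
    obtain ⟨w, hw, hwU⟩ := exists_cyl_append_subset_of_dense (hU k).1 (hU k).2 (u ++ c ++ p)
    obtain ⟨s, hs⟩ := nonempty_iff_ne_empty.2 (hp w)
    refine ⟨p ++ w ++ s, hs, by simp [hw], (cyl_subset_cyl ⟨s, ?_⟩).trans hwU⟩
    simp only [List.append_assoc]
  choose d hdV hd_ne hdU using hmove
  let c : ℕ → List X := Nat.rec [] fun k c => c ++ d k c
  let f : ℕ → List X := fun k => d k (c k)
  have hc : ∀ k, prefixConcat f k = c k := fun k => by
    induction k with
    | zero => rfl
    | succ k ih => rw [prefixConcat_succ, ih]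
  obtain ⟨η, hη⟩ := exists_forall_mem_cyl (c := prefixConcat f)
    (fun k => prefixConcat_succ f k ▸ List.prefix_append _ _)
    (le_length_prefixConcat fun k => hd_ne k (c k))
  refine ⟨η, ⟨f, fun k => ⟨hdV k (c k), hd_ne k (c k)⟩, hη⟩, hUF (mem_iInter.2 fun k => ?_)⟩
  refine hdU k (c k) (wcat_mem_cyl_append_iff.2 ?_)
  have hη_succ := hη (k + 1)
  rwa [prefixConcat_succ, hc k] at hη_succ

theorem exists_catOmega_omegaPow_subset_of_isMeagre [Nonempty X] {W V : Language X}
    (hV : V.IsRegular) (hmeagre : IsMeagre (catOmega W (omegaPow V))) :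
    ∃ w, catOmega W (omegaPow V) ⊆ catOmega ⊤ (infixOcc w)ᶜ := by
  obtain hW | ⟨u, hu⟩ := (W : Set (List X)).eq_empty_or_nonempty
  · refine ⟨[], ?_⟩
    rintro _ ⟨u, hu, -⟩
    exact absurd (hW ▸ hu) (notMem_empty u)
  · obtain ⟨w, hw⟩ : ∃ w, ∀ p, (V∗).leftQuotient (p ++ w) = 0 := by
      refine exists_forall_leftQuotient_append_eq_zero (isRegular_kstar hV) fun p => ?_
      by_contra! hp
      obtain ⟨η, hη, hηW⟩ := exists_mem_omegaPow_wcat_notMem_of_isMeagre hmeagre hp u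
      exact hηW ⟨u, hu, η, omegaPow_kstar_subset V hη, rfl⟩
    exact ⟨w, catOmega_mono le_top (omegaPow_subset_compl_infixOcc hw)⟩

theorem IsRegOmega.exists_subset_of_isMeagre [Nonempty X] {F : Set (ℕ → X)} (hreg : IsRegOmega F)
    (hmeagre : IsMeagre F) : ∃ w ≠ [], F ⊆ catOmega ⊤ (infixOcc w)ᶜ := by
  obtain ⟨n, W, V, hWV, rfl⟩ := hreg
  choose w hw using fun i => exists_catOmega_omegaPow_subset_of_isMeagre (hWV i).2.isRegular
    (hmeagre.mono (subset_iUnion (fun i => catOmega (W i) (omegaPow (V i))) i))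
  refine ⟨(List.ofFn w).flatten ++ [Classical.arbitrary X], by simp,
    iUnion_subset fun i => (hw i).trans (catOmega_mono le_rfl (compl_subset_compl.2 ?_))⟩
  have hwi : w i <:+: (List.ofFn w).flatten :=
    List.infix_of_mem_flatten ((List.mem_ofFn' w (w i)).2 (mem_range_self i))
  exact infixOcc_subset_infixOcc (hwi.trans (List.prefix_append _ _).isInfix)

theorem isMeagre_singleton [Nontrivial X] (ξ : ℕ → X) : IsMeagre ({ξ} : Set (ℕ → X)) := by
  refine IsNowhereDense.isMeagre ?_
  rw [isClosed_singleton.isNowhereDense_iff, eq_empty_iff_forall_notMem]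
  intro η hη
  obtain ⟨_, ⟨w, rfl⟩, -, hw⟩ :=
    isTopologicalBasis_cyl.exists_subset_of_mem_open hη isOpen_interior
  have heq : ∀ ζ, wcat w ζ = ξ := fun ζ =>
    mem_singleton_iff.1 (interior_subset (hw (wcat_mem_cyl w ζ)))
  obtain ⟨x, y, hxy⟩ := exists_pair_ne X
  have hconst : (fun _ : ℕ => x) = fun _ => y :=
    wcat_injective w ((heq _).trans (heq _).symm)
  exact hxy (congrFun hconst 0)

theorem hasABP_iff {F : Set (ℕ → X)} :
    HasABP F ↔ ∃ E F' : Set (ℕ → X),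
      IsRegOmega E ∧ IsOpen E ∧ IsRegOmega F' ∧ IsMeagre F' ∧ symmDiff F E ⊆ F' := by
  obtain rfl := DiscreteTopology.eq_bot (α := X)
  rfl

theorem hasABP_iff_of_isMeagre {F : Set (ℕ → X)} (hF : IsMeagre F) :
    HasABP F ↔ ∃ F' : Set (ℕ → X), IsRegOmega F' ∧ IsMeagre F' ∧ F ⊆ F' := by
  rw [hasABP_iff]
  constructor
  · rintro ⟨E, F', -, hE, hF'reg, hF', hsub⟩
    have hE_subset : E ⊆ F ∪ F' := fun ξ hξE =>
      or_iff_not_imp_left.2 fun hξF => hsub (.inr ⟨hξE, hξF⟩)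
    obtain rfl | hE_ne := E.eq_empty_or_nonempty
    · exact ⟨F', hF'reg, hF', fun ξ hξ => hsub (.inl ⟨hξ, notMem_empty ξ⟩)⟩
    · exact absurd ((hF.union hF').mono hE_subset) (not_isMeagre_of_isOpen hE hE_ne)
  · rintro ⟨F', hF'reg, hF', hsub⟩
    refine ⟨∅, F', isRegOmega_empty, isOpen_empty, hF'reg, hF', ?_⟩
    rwa [← bot_eq_empty, symmDiff_bot]

end BaireCategory

theorem stmt15_general {X : Type} [Countable X] [Nontrivial X] :
    ∃ G : ℕ → Set (ℕ → X), (∀ i, HasABP (G i)) ∧ ¬ HasABP (⋃ i, G i) := by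
  let : TopologicalSpace X := ⊥
  have : DiscreteTopology X := ⟨rfl⟩
  have : Nonempty {w : List X // w ≠ []} := ⟨[Classical.arbitrary X], List.cons_ne_nil _ _⟩
  obtain ⟨e, he⟩ := exists_surjective_nat {w : List X // w ≠ []}
  let G (w : {w : List X // w ≠ []}) : Set (ℕ → X) := {periodicWord w.1 w.2}
  have hG w : IsMeagre (G w) := isMeagre_singleton _
  refine ⟨fun i => G (e i), fun i => (hasABP_iff_of_isMeagre (hG _)).2
    ⟨G (e i), isRegOmega_singleton_periodicWord _, hG _, subset_rfl⟩, fun hABP => ?_⟩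
  rw [he.iUnion_comp G, hasABP_iff_of_isMeagre (he.iUnion_comp G ▸ isMeagre_iUnion fun _ => hG _)]
    at hABP
  obtain ⟨F, hFreg, hF, hGF⟩ := hABP
  obtain ⟨w, hw, hFw⟩ := hFreg.exists_subset_of_isMeagre hF
  exact periodicWord_notMem_catOmega_compl_infixOcc hw (hFw (hGF (mem_iUnion.2 ⟨⟨w, hw⟩, rfl⟩)))

theorem stmt15 {X : Type} [Fintype X] (hX : 2 ≤ Fintype.card X) :
    ∃ G : ℕ → Set (ℕ → X), (∀ i, HasABP (G i)) ∧ ¬ HasABP (⋃ i, G i) :=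
  have : Nontrivial X := Fintype.one_lt_card_iff_nontrivial.1 hX
  stmt15_general

end AutoBaire
end

section
/- Let X = {a, b} be a two-letter alphabet and V₃ ⊆ {a,b}* be the least language satisfying V₃ = {a} ∪ {b}·V₃·V₃·V₃. Then σ(V₃) := Σ_{w∈V₃} 2^{−|w|} equals (√5 − 1)/2, i.e., σ(V₃) is the minimal positive solution of the equation t = (1 + t³)/2, and this value is irrational. -/
/-!
A language satisfying `V = {a} ∪ {b}·Vᵏ` is a prefix code, by induction on the length of its words:
the first letter tells the two cases apart, and the `k` factors from `V` are then split off one by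
one. So the union and the concatenations are unambiguous, and `s = ∑ r ^ |w|` satisfies
`s = r + r * s ^ k`. Conversely, if `r + r * c ^ k ≤ c`, then by induction on `n` the words of
length at most `n` contribute at most `c`. Hence `s` is the least solution; for `k = 3` and
`r = 1/2` the cubic is `(t - 1) * (t + ψ) * (t + φ) = 0`, whose least positive root is
`-ψ = (√5 - 1) / 2`.
-/

open Set MeasureTheory Computability

namespace AutoBaire

variable {X : Type}

/-- The fixed-point equation `V = {a} ∪ {b}·V·V·V`. -/
def V3Eq (a b : X) (V : Language X) : Prop :=
  ∀ u : List X, u ∈ V ↔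
    (u = [a] ∨ ∃ v₁ ∈ V, ∃ v₂ ∈ V, ∃ v₃ ∈ V, u = [b] ++ v₁ ++ v₂ ++ v₃)

open scoped ENNReal goldenRatio

section PrefixFree

variable {α : Type*} {L M : Language α} {a b : α}

/-- `L` is a prefix code: no word of `L` is a proper prefix of another word of `L`. This is what
makes concatenation with `L` on the left unambiguous. -/
def IsPrefixFree (L : Language α) : Prop :=
  ∀ ⦃u⦄, u ∈ L → ∀ ⦃v⦄, v ∈ L → u <+: v → u = v

theorem IsPrefixFree.mono (hM : IsPrefixFree M) (h : L ≤ M) : IsPrefixFree L :=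
  fun _ hu _ hv ↦ hM (h hu) (h hv)

theorem isPrefixFree_singleton (w : List α) : IsPrefixFree {w} := by
  rintro u rfl v rfl -
  rfl

theorem IsPrefixFree.append_inj (hL : IsPrefixFree L) {u u' x x' : List α} (hu : u ∈ L)
    (hu' : u' ∈ L) (h : u ++ x = u' ++ x') : u = u' ∧ x = x' := by
  have huu' : u = u' := by
    have hp : u <+: u' ++ x' := ⟨x, h⟩
    have hp' : u' <+: u' ++ x' := List.prefix_append u' x'
    rcases le_total u.length u'.length with hle | hle
    · exact hL hu hu' (List.prefix_of_prefix_length_le hp hp' hle)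
    · exact (hL hu' hu (List.prefix_of_prefix_length_le hp' hp hle)).symm
  subst huu'
  exact ⟨rfl, List.append_cancel_left h⟩

theorem IsPrefixFree.mul (hL : IsPrefixFree L) (hM : IsPrefixFree M) : IsPrefixFree (L * M) := by
  rintro _ ⟨u, hu, v, hv, rfl⟩ _ ⟨u', hu', v', hv', rfl⟩ ⟨t, ht⟩
  obtain ⟨rfl, hvt⟩ := hL.append_inj hu hu' ((List.append_assoc u v t).symm.trans ht)
  exact congrArg (u ++ ·) (hM hv hv' ⟨t, hvt⟩)

theorem IsPrefixFree.pow (hL : IsPrefixFree L) (k : ℕ) : IsPrefixFree (L ^ k) := by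
  induction k with
  | zero => exact pow_zero L ▸ isPrefixFree_singleton []
  | succ k ih => simpa only [pow_succ] using ih.mul hL

theorem IsPrefixFree.letter_add_letter_mul (hL : IsPrefixFree L) (hab : a ≠ b) :
    IsPrefixFree ({[a]} + {[b]} * L) := by
  rintro u (rfl | ⟨_, rfl, x, hx, rfl⟩) v (rfl | ⟨_, rfl, y, hy, rfl⟩) huv
  · rfl
  · simp [hab] at huv
  · simp [hab.symm] at huv
  · have hxy : x <+: y := by simpa using huv
    rw [hL hx hy hxy]

end PrefixFree

section Truncate

variable {α : Type*} {L M : Language α} {a b : α} {k : ℕ}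

/-- The words of `L` of length at most `n`. Truncations turn an induction on the length of words
into inequalities between languages. -/
def truncate (n : ℕ) (L : Language α) : Language α :=
  {w | w ∈ L ∧ w.length ≤ n}

theorem truncate_mul_le (n : ℕ) (L M : Language α) :
    truncate n (L * M) ≤ truncate n L * truncate n M := by
  rintro _ ⟨⟨u, hu, v, hv, rfl⟩, hn⟩
  have hlen : u.length + v.length ≤ n := by simpa only [List.length_append] using hn
  exact ⟨u, ⟨hu, by omega⟩, v, ⟨hv, by omega⟩, rfl⟩

theorem truncate_pow_le (n : ℕ) (L : Language α) (k : ℕ) :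
    truncate n (L ^ k) ≤ truncate n L ^ k := by
  induction k with
  | zero => exact fun _ hw ↦ hw.1
  | succ k ih =>
    simp only [pow_succ]
    exact (truncate_mul_le n _ L).trans (mul_le_mul_left ih _)

theorem truncate_zero_of_eq_add_mul (hL : L = {[a]} + {[b]} * M) : truncate 0 L = 0 := by
  subst hL
  ext w
  refine iff_of_false ?_ (Language.notMem_zero w)
  rintro ⟨rfl | ⟨_, rfl, _, _, rfl⟩, hlen⟩ <;> simp at hlen

theorem truncate_succ_le_of_eq_add_mul_pow (n : ℕ) (hL : L = {[a]} + {[b]} * L ^ k) :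
    truncate (n + 1) L ≤ {[a]} + {[b]} * truncate n L ^ k := by
  rintro w ⟨hw, hlen⟩
  rw [hL] at hw
  rcases hw with rfl | ⟨_, rfl, v, hv, rfl⟩
  · exact Or.inl rfl
  · exact Or.inr ⟨[b], rfl, v, truncate_pow_le n L k ⟨hv, by simpa using hlen⟩, rfl⟩

theorem isPrefixFree_of_forall_truncate (h : ∀ n, IsPrefixFree (truncate n L)) : IsPrefixFree L :=
  fun _ hu v hv huv ↦ h v.length ⟨hu, huv.length_le⟩ ⟨hv, le_rfl⟩ huv

theorem isPrefixFree_of_eq_add_mul_pow (hab : a ≠ b) (hL : L = {[a]} + {[b]} * L ^ k) :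
    IsPrefixFree L := by
  refine isPrefixFree_of_forall_truncate fun n ↦ ?_
  induction n with
  | zero =>
    rw [truncate_zero_of_eq_add_mul hL]
    exact fun _ hu ↦ (Language.notMem_zero _ hu).elim
  | succ n ih =>
    exact ((ih.pow k).letter_add_letter_mul hab).mono (truncate_succ_le_of_eq_add_mul_pow n hL)

end Truncate

section Sigma

variable {α : Type*} {L M : Language α} {a b : α} {k : ℕ} {r c : ℝ≥0∞}

/-- The sum of `r ^ |w|` over the words `w` of `L`, so that `σ(L)` is `sigma 2⁻¹ L`. It is valued in
`ℝ≥0∞` in order to make sense without a proof of convergence. -/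
noncomputable def sigma (r : ℝ≥0∞) (L : Language α) : ℝ≥0∞ :=
  ∑' w : {u : List α // u ∈ L}, r ^ (w : List α).length

theorem sigma_mono (r : ℝ≥0∞) (h : L ≤ M) : sigma r L ≤ sigma r M :=
  ENNReal.tsum_mono_subtype (fun w : List α ↦ r ^ w.length) h

theorem sigma_zero (r : ℝ≥0∞) : sigma r (0 : Language α) = 0 :=
  tsum_empty (f := fun w : (∅ : Set (List α)) ↦ r ^ (w : List α).length)

theorem sigma_singleton (r : ℝ≥0∞) (w : List α) : sigma r {w} = r ^ w.length :=
  tsum_singleton w fun w : List α ↦ r ^ w.length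

theorem sigma_one (r : ℝ≥0∞) : sigma r (1 : Language α) = 1 :=
  (sigma_singleton r []).trans (pow_zero r)

theorem sigma_add_le (r : ℝ≥0∞) (L M : Language α) : sigma r (L + M) ≤ sigma r L + sigma r M :=
  ENNReal.tsum_union_le (fun w : List α ↦ r ^ w.length) L M

theorem sigma_add (r : ℝ≥0∞) (h : Disjoint L M) : sigma r (L + M) = sigma r L + sigma r M :=
  Summable.tsum_union_disjoint (f := fun w : List α ↦ r ^ w.length) h ENNReal.summable
    ENNReal.summable

/-- Concatenation, as a map from pairs of words onto the product language. -/
def appendPair (L M : Language α) (p : {u // u ∈ L} × {v // v ∈ M}) : {w // w ∈ L * M} :=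
  ⟨p.1 ++ p.2, Language.append_mem_mul p.1.2 p.2.2⟩

theorem appendPair_surjective (L M : Language α) : Function.Surjective (appendPair L M) := by
  rintro ⟨_, u, hu, v, hv, rfl⟩
  exact ⟨(⟨u, hu⟩, ⟨v, hv⟩), rfl⟩

theorem IsPrefixFree.appendPair_injective (hL : IsPrefixFree L) (M : Language α) :
    Function.Injective (appendPair L M) := by
  rintro ⟨⟨u, hu⟩, ⟨v, hv⟩⟩ ⟨⟨u', hu'⟩, ⟨v', hv'⟩⟩ h
  obtain ⟨rfl, rfl⟩ := hL.append_inj hu hu' (congrArg Subtype.val h)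
  rfl

theorem tsum_appendPair (r : ℝ≥0∞) (L M : Language α) :
    ∑' p, r ^ (appendPair L M p : List α).length = sigma r L * sigma r M := by
  simp only [appendPair, List.length_append, pow_add, sigma, ENNReal.tsum_prod',
    ENNReal.tsum_mul_left, ENNReal.tsum_mul_right]

theorem sigma_mul_le (r : ℝ≥0∞) (L M : Language α) : sigma r (L * M) ≤ sigma r L * sigma r M :=
  (ENNReal.tsum_le_tsum_comp_of_surjective (appendPair_surjective L M) _).trans_eq
    (tsum_appendPair r L M)

theorem IsPrefixFree.sigma_mul (hL : IsPrefixFree L) (r : ℝ≥0∞) (M : Language α) :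
    sigma r (L * M) = sigma r L * sigma r M := by
  have hbij := And.intro (hL.appendPair_injective M) (appendPair_surjective L M)
  exact ((Equiv.ofBijective _ hbij).tsum_eq _).symm.trans (tsum_appendPair r L M)

theorem sigma_pow_le (r : ℝ≥0∞) (L : Language α) (k : ℕ) : sigma r (L ^ k) ≤ sigma r L ^ k := by
  induction k with
  | zero => simp only [pow_zero, sigma_one, le_rfl]
  | succ k ih =>
    simp only [pow_succ]
    exact (sigma_mul_le r _ L).trans (mul_le_mul_left ih _)

theorem IsPrefixFree.sigma_pow (hL : IsPrefixFree L) (r : ℝ≥0∞) (k : ℕ) :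
    sigma r (L ^ k) = sigma r L ^ k := by
  induction k with
  | zero => simp only [pow_zero, sigma_one]
  | succ k ih => simp only [pow_succ', hL.sigma_mul, ih]

theorem sigma_le_of_forall_truncate_le (h : ∀ n, sigma r (truncate n L) ≤ c) : sigma r L ≤ c := by
  refine ENNReal.summable.tsum_le_of_sum_le fun s ↦ ?_
  let n := s.sup fun w ↦ (w : List α).length
  calc ∑ w ∈ s, r ^ (w : List α).length
      = ∑' w : s.map (Function.Embedding.subtype _), r ^ (w : List α).length := by
        rw [Finset.tsum_subtype _ fun w : List α ↦ r ^ w.length, Finset.sum_map]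
        rfl
    _ ≤ sigma r (truncate n L) := by
        refine ENNReal.tsum_mono_subtype (fun w : List α ↦ r ^ w.length) fun w hw ↦ ?_
        obtain ⟨v, hv, rfl⟩ := Finset.mem_map.mp hw
        exact ⟨v.2, Finset.le_sup (f := fun w : {u // u ∈ L} ↦ (w : List α).length) hv⟩
    _ ≤ c := h n

theorem sigma_eq_add_mul_pow (hab : a ≠ b) (hL : L = {[a]} + {[b]} * L ^ k) (r : ℝ≥0∞) :
    sigma r L = r + r * sigma r L ^ k := by
  have hdisj : Disjoint ({[a]} : Language α) ({[b]} * L ^ k) := by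
    refine Set.disjoint_left.mpr ?_
    rintro _ rfl ⟨_, rfl, _, _, h⟩
    exact hab (List.cons_eq_cons.mp h).1.symm
  conv_lhs => rw [hL]
  rw [sigma_add r hdisj, (isPrefixFree_singleton _).sigma_mul,
    (isPrefixFree_of_eq_add_mul_pow hab hL).sigma_pow, sigma_singleton, sigma_singleton]
  simp only [List.length_singleton, pow_one]

theorem sigma_le_of_add_mul_pow_le (hL : L = {[a]} + {[b]} * L ^ k) (hc : r + r * c ^ k ≤ c) :
    sigma r L ≤ c := by
  refine sigma_le_of_forall_truncate_le fun n ↦ ?_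
  induction n with
  | zero => simp only [truncate_zero_of_eq_add_mul hL, sigma_zero, zero_le]
  | succ n ih =>
    calc sigma r (truncate (n + 1) L)
        ≤ sigma r ({[a]} + {[b]} * truncate n L ^ k) :=
          sigma_mono r (truncate_succ_le_of_eq_add_mul_pow n hL)
      _ ≤ sigma r {[a]} + sigma r {[b]} * sigma r (truncate n L) ^ k := by
          grw [sigma_add_le, sigma_mul_le, sigma_pow_le]
      _ = r + r * sigma r (truncate n L) ^ k := by
          simp only [sigma_singleton, List.length_singleton, pow_one]
      _ ≤ r + r * c ^ k := by gcongr
      _ ≤ c := hc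

theorem tsum_pow_length_eq_toReal_sigma {p : ℝ} (hp : 0 ≤ p) (L : Language α) :
    ∑' w : {u : List α // u ∈ L}, p ^ (w : List α).length =
      (sigma (ENNReal.ofReal p) L).toReal := by
  rw [sigma, ENNReal.tsum_toReal_eq fun _ ↦ ENNReal.pow_ne_top ENNReal.ofReal_ne_top]
  simp only [ENNReal.toReal_pow, ENNReal.toReal_ofReal hp]

theorem tsum_pow_length_eq_of_isLeast {p g : ℝ} (hab : a ≠ b) (hL : L = {[a]} + {[b]} * L ^ k)
    (hp : 0 < p) (hg : IsLeast {t : ℝ | 0 < t ∧ t = p + p * t ^ k} g) :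
    ∑' w : {u : List α // u ∈ L}, p ^ (w : List α).length = g := by
  rw [tsum_pow_length_eq_toReal_sigma hp.le]
  obtain ⟨⟨hg0, hgeq⟩, hgmin⟩ := hg
  set s := sigma (ENNReal.ofReal p) L
  have hsg : s ≤ ENNReal.ofReal g := by
    refine sigma_le_of_add_mul_pow_le hL (le_of_eq ?_)
    rw [← ENNReal.ofReal_pow hg0.le, ← ENNReal.ofReal_mul hp.le,
      ← ENNReal.ofReal_add hp.le (by positivity), ← hgeq]
  have hs : s ≠ ∞ := ne_top_of_le_ne_top ENNReal.ofReal_ne_top hsg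
  have hseq : s.toReal = p + p * s.toReal ^ k := by
    have hfix := congrArg ENNReal.toReal (sigma_eq_add_mul_pow hab hL (ENNReal.ofReal p))
    rwa [ENNReal.toReal_add ENNReal.ofReal_ne_top
      (ENNReal.mul_ne_top ENNReal.ofReal_ne_top (ENNReal.pow_ne_top hs)),
      ENNReal.toReal_mul, ENNReal.toReal_pow, ENNReal.toReal_ofReal hp.le] at hfix
  have hspos : 0 < s.toReal := by
    rw [hseq]
    positivity
  exact le_antisymm (ENNReal.toReal_le_of_le_ofReal hg0.le hsg) (hgmin ⟨hspos, hseq⟩)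

end Sigma

theorem neg_goldenConj_eq : -ψ = (√5 - 1) / 2 := by
  rw [Real.goldenConj]
  ring

theorem isLeast_neg_goldenConj : IsLeast {t : ℝ | 0 < t ∧ t = (1 + t ^ 3) / 2} (-ψ) := by
  refine ⟨⟨neg_pos.mpr Real.goldenConj_neg, ?_⟩, ?_⟩
  · linear_combination (1 + ψ) / 2 * Real.goldenConj_sq
  · rintro t ⟨ht, heq⟩
    have hfactor : (t - 1) * ((t + ψ) * (t + φ)) = 0 := by
      linear_combination (-2) * heq + (t - 1) * t * Real.goldenRatio_add_goldenConj
        + (t - 1) * Real.goldenRatio_mul_goldenConj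
    have hφ : t + φ ≠ 0 := (add_pos ht Real.goldenRatio_pos).ne'
    rcases mul_eq_zero.mp hfactor with h | h
    · linarith [Real.neg_one_lt_goldenConj]
    · linarith [(mul_eq_zero.mp h).resolve_right hφ]

theorem V3Eq.eq_add_mul_pow {a b : X} {V : Language X} (h : V3Eq a b V) :
    V = {[a]} + {[b]} * V ^ 3 := by
  ext u
  rw [h u, pow_three, Language.mem_add]
  refine or_congr Iff.rfl ?_
  simp only [Language.mem_mul, List.append_assoc]
  constructor
  · rintro ⟨v₁, h₁, v₂, h₂, v₃, h₃, rfl⟩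
    exact ⟨[b], rfl, _, ⟨v₁, h₁, _, ⟨v₂, h₂, v₃, h₃, rfl⟩, rfl⟩, rfl⟩
  · rintro ⟨_, rfl, _, ⟨v₁, h₁, _, ⟨v₂, h₂, v₃, h₃, rfl⟩, rfl⟩, rfl⟩
    exact ⟨v₁, h₁, v₂, h₂, v₃, h₃, rfl⟩

theorem stmt17_general {a b : X} (hab : a ≠ b) (V : Language X) (hfix : V3Eq a b V) :
    (∑' w : {u : List X // u ∈ V}, ((2 : ℝ)⁻¹) ^ (w : List X).length)
        = (Real.sqrt 5 - 1) / 2 ∧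
    ((Real.sqrt 5 - 1) / 2 = (1 + ((Real.sqrt 5 - 1) / 2) ^ 3) / 2 ∧
      ∀ t : ℝ, 0 < t → t = (1 + t ^ 3) / 2 → (Real.sqrt 5 - 1) / 2 ≤ t) ∧
    Irrational ((Real.sqrt 5 - 1) / 2) := by
  rw [← neg_goldenConj_eq]
  obtain ⟨⟨_, hroot⟩, hmin⟩ := isLeast_neg_goldenConj
  have hcubic (t : ℝ) : (1 + t ^ 3) / 2 = 2⁻¹ + 2⁻¹ * t ^ 3 := by ring
  refine ⟨?_, ⟨hroot, fun t ht heq ↦ hmin ⟨ht, heq⟩⟩, Real.goldenConj_irrational.neg⟩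
  refine tsum_pow_length_eq_of_isLeast hab hfix.eq_add_mul_pow (by positivity) ?_
  simpa only [hcubic] using isLeast_neg_goldenConj

theorem stmt17 (V₃ : Language Bool)
    (hfix : V3Eq false true V₃)
    (hleast : ∀ W : Language Bool, V3Eq false true W → ∀ u, u ∈ V₃ → u ∈ W) :
    (∑' w : {u : List Bool // u ∈ V₃}, ((2 : ℝ)⁻¹) ^ (w : List Bool).length)
        = (Real.sqrt 5 - 1) / 2 ∧
    ((Real.sqrt 5 - 1) / 2 = (1 + ((Real.sqrt 5 - 1) / 2) ^ 3) / 2 ∧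
      ∀ t : ℝ, 0 < t → t = (1 + t ^ 3) / 2 → (Real.sqrt 5 - 1) / 2 ≤ t) ∧
    Irrational ((Real.sqrt 5 - 1) / 2) :=
  stmt17_general Bool.false_ne_true V₃ hfix

end AutoBaire
end
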